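/- Let $u$ solve the free wave equation on $\mathbb{R}^{3+1}$ with smooth initial data $(u_0, u_1)$ where $u_0, u_1$ and their derivatives decay at infinity. If $-\Delta u_0(x) > |\nabla u_1(x)|$ for all $x$, then $u(x,t) > 0$ for all $(x,t) \in \mathbb{R}^{3+1}$. -/

import Mathlib

open Filter

/-- The Laplacian on ℝ³ as a sum of second directional derivatives. -/
noncomputable def lap3 (f : EuclideanSpace ℝ (Fin 3) → ℝ) (x : EuclideanSpace ℝ (Fin 3)) : ℝ :=
  ∑ i : Fin 3,
    iteratedDeriv 2 (fun s : ℝ => f (x + s • (EuclideanSpace.single i (1:ℝ)))) 0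
namespace WavePos
open Real Set Topology intervalIntegral

/-- Differentiation under the integral over a compact interval. -/
lemma deriv_int (a b : ℝ) (g g' : ℝ → ℝ → ℝ)
    (hg : Continuous fun p : ℝ × ℝ => g p.1 p.2)
    (hg' : Continuous fun p : ℝ × ℝ => g' p.1 p.2)
    (hd : ∀ s y, HasDerivAt (fun s => g s y) (g' s y) s) (s : ℝ) :
    HasDerivAt (fun s => ∫ y in a..b, g s y) (∫ y in a..b, g' s y) s := by
  have hK : IsCompact (Icc (s - 1) (s + 1) ×ˢ uIcc a b) := isCompact_Icc.prod isCompact_uIcc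
  obtain ⟨C, hC⟩ := hK.exists_bound_of_continuousOn hg'.continuousOn
  have c1 : ∀ s, Continuous (g s) := fun s => hg.comp (by fun_prop : Continuous fun y : ℝ => (s, y))
  have c2 : ∀ s, Continuous (g' s) :=
    fun s => hg'.comp (by fun_prop : Continuous fun y : ℝ => (s, y))
  refine (intervalIntegral.hasDerivAt_integral_of_dominated_loc_of_deriv_le
    (F := g) (F' := g') (bound := fun _ => C)
    (Icc_mem_nhds (by linarith : s - 1 < s) (by linarith : s < s + 1)) ?_ ?_ ?_ ?_ ?_ ?_).2
  · exact Eventually.of_forall fun s => (c1 s).aestronglyMeasurable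
  · exact (c1 s).intervalIntegrable _ _
  · exact (c2 s).aestronglyMeasurable
  · refine Eventually.of_forall fun y hy x hx => hC (x, y) ⟨hx, uIoc_subset_uIcc hy⟩
  · exact continuous_const.intervalIntegrable _ _
  · exact Eventually.of_forall fun y hy x hx => hd x y

/-- Iterated integral over the angle box. -/
noncomputable def J (g : ℝ → ℝ → ℝ) : ℝ :=
  ∫ φ in (0:ℝ)..π, ∫ θ in (0:ℝ)..(2 * π), g φ θ

lemma cont_inner (g : ℝ → ℝ → ℝ) (hg : Continuous fun p : ℝ × ℝ => g p.1 p.2) (a b : ℝ) :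
    Continuous fun φ => ∫ θ in a..b, g φ θ :=
  intervalIntegral.continuous_parametric_intervalIntegral_of_continuous' (f := g) hg a b

lemma cont_slice (g : ℝ → ℝ → ℝ) (hg : Continuous fun p : ℝ × ℝ => g p.1 p.2) (φ : ℝ) :
    Continuous (g φ) := hg.comp (by fun_prop : Continuous fun y : ℝ => (φ, y))

lemma deriv_J (g g' : ℝ → ℝ → ℝ → ℝ)
    (hg : Continuous fun p : ℝ × ℝ × ℝ => g p.1 p.2.1 p.2.2)
    (hg' : Continuous fun p : ℝ × ℝ × ℝ => g' p.1 p.2.1 p.2.2)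
    (hd : ∀ s φ θ, HasDerivAt (fun s => g s φ θ) (g' s φ θ) s) (s : ℝ) :
    HasDerivAt (fun s => J (g s)) (J (g' s)) s := by
  unfold J
  refine deriv_int 0 π (fun s φ => ∫ θ in (0:ℝ)..(2 * π), g s φ θ)
    (fun s φ => ∫ θ in (0:ℝ)..(2 * π), g' s φ θ) ?_ ?_ ?_ s
  · refine intervalIntegral.continuous_parametric_intervalIntegral_of_continuous'
      (f := fun (p : ℝ × ℝ) θ => g p.1 p.2 θ) ?_ _ _
    exact hg.comp (by fun_prop : Continuous fun q : (ℝ × ℝ) × ℝ => (q.1.1, q.1.2, q.2))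
  · refine intervalIntegral.continuous_parametric_intervalIntegral_of_continuous'
      (f := fun (p : ℝ × ℝ) θ => g' p.1 p.2 θ) ?_ _ _
    exact hg'.comp (by fun_prop : Continuous fun q : (ℝ × ℝ) × ℝ => (q.1.1, q.1.2, q.2))
  · intro s φ
    refine deriv_int 0 (2 * π) (fun s θ => g s φ θ) (fun s θ => g' s φ θ) ?_ ?_ ?_ s
    · exact hg.comp (by fun_prop : Continuous fun q : ℝ × ℝ => (q.1, φ, q.2))
    · exact hg'.comp (by fun_prop : Continuous fun q : ℝ × ℝ => (q.1, φ, q.2))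
    · exact fun s θ => hd s φ θ

lemma J_add (g h : ℝ → ℝ → ℝ) (hg : Continuous fun p : ℝ × ℝ => g p.1 p.2)
    (hh : Continuous fun p : ℝ × ℝ => h p.1 p.2) :
    J (fun φ θ => g φ θ + h φ θ) = J g + J h := by
  unfold J
  rw [← intervalIntegral.integral_add ((cont_inner g hg _ _).intervalIntegrable _ _)
    ((cont_inner h hh _ _).intervalIntegrable _ _)]
  congr 1
  ext φ
  exact intervalIntegral.integral_add ((cont_slice g hg φ).intervalIntegrable _ _)
    ((cont_slice h hh φ).intervalIntegrable _ _)

lemma J_add_zero (g h : ℝ → ℝ → ℝ) (e1 : J g = 0) (e2 : J h = 0)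
    (hg : Continuous fun p : ℝ × ℝ => g p.1 p.2)
    (hh : Continuous fun p : ℝ × ℝ => h p.1 p.2) :
    J (fun φ θ => g φ θ + h φ θ) = 0 := by
  rw [J_add g h hg hh, e1, e2, add_zero]

lemma J_const_mul (c : ℝ) (g : ℝ → ℝ → ℝ) : J (fun φ θ => c * g φ θ) = c * J g := by
  unfold J
  simp [intervalIntegral.integral_const_mul]

lemma J_pos (g : ℝ → ℝ → ℝ) (hg : Continuous fun p : ℝ × ℝ => g p.1 p.2)
    (h : ∀ φ θ, φ ∈ Ioo 0 π → 0 < g φ θ) : 0 < J g := by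
  unfold J
  refine intervalIntegral_pos_of_pos_on ((cont_inner g hg _ _).intervalIntegrable _ _)
    (fun φ hφ => ?_) pi_pos
  exact intervalIntegral_pos_of_pos_on ((cont_slice g hg φ).intervalIntegrable _ _)
    (fun θ _ => h φ θ hφ) (by positivity)

lemma J_bound (g : ℝ → ℝ → ℝ) (C : ℝ) (h : ∀ φ θ, |g φ θ| ≤ C) :
    |J g| ≤ C * (2 * π * π) := by
  unfold J
  have h1 : ∀ φ, ‖∫ θ in (0:ℝ)..(2 * π), g φ θ‖ ≤ C * (2 * π) := fun φ => by
    have := intervalIntegral.norm_integral_le_of_norm_le_const (a := 0) (b := 2 * π)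
      (f := g φ) (C := C) (fun θ _ => h φ θ)
    rwa [sub_zero, abs_of_pos (by positivity)] at this
  have := intervalIntegral.norm_integral_le_of_norm_le_const (a := 0) (b := π)
      (f := fun φ => ∫ θ in (0:ℝ)..(2 * π), g φ θ) (C := C * (2 * π)) (fun φ _ => h1 φ)
  rw [sub_zero, abs_of_pos pi_pos, Real.norm_eq_abs] at this
  linarith

lemma J_sin : J (fun φ _ => sin φ) = 4 * π := by
  unfold J
  simp
  ring

lemma J_phi (P P' : ℝ → ℝ → ℝ) (hP : Continuous fun p : ℝ × ℝ => P p.1 p.2)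
    (hP' : Continuous fun p : ℝ × ℝ => P' p.1 p.2)
    (hd : ∀ φ θ, HasDerivAt (fun φ => P φ θ) (P' φ θ) φ)
    (h0 : ∀ θ, P 0 θ = 0) (h1 : ∀ θ, P π θ = 0) : J P' = 0 := by
  unfold J
  rw [intervalIntegral.integral_eq_sub_of_hasDerivAt
    (fun φ _ => deriv_int 0 (2 * π) P P' hP hP' hd φ)
    ((cont_inner P' hP' _ _).intervalIntegrable _ _)]
  simp [h0, h1]

lemma J_theta (Q Q' : ℝ → ℝ → ℝ) (hQ' : Continuous fun p : ℝ × ℝ => Q' p.1 p.2)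
    (hd : ∀ φ θ, HasDerivAt (fun θ => Q φ θ) (Q' φ θ) θ)
    (h0 : ∀ φ, Q φ (2 * π) = Q φ 0) : J Q' = 0 := by
  unfold J
  have : ∀ φ, ∫ θ in (0:ℝ)..(2 * π), Q' φ θ = 0 := fun φ => by
    rw [intervalIntegral.integral_eq_sub_of_hasDerivAt (fun θ _ => hd φ θ)
      ((cont_slice Q' hQ' φ).intervalIntegrable _ _), h0, sub_self]
  simp [this]

section abs
variable {V : Type*} [NormedAddCommGroup V] [NormedSpace ℝ V]

/-- The radial unit vector. -/
noncomputable def om (b : Fin 3 → V) (φ θ : ℝ) : V :=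
  (sin φ * cos θ) • b 0 + (sin φ * sin θ) • b 1 + (cos φ) • b 2

noncomputable def omφ (b : Fin 3 → V) (φ θ : ℝ) : V :=
  (cos φ * cos θ) • b 0 + (cos φ * sin θ) • b 1 + (-sin φ) • b 2

noncomputable def eθ (b : Fin 3 → V) (θ : ℝ) : V :=
  (-sin θ) • b 0 + (cos θ) • b 1

@[fun_prop] lemma cont_om (b : Fin 3 → V) : Continuous fun p : ℝ × ℝ => om b p.1 p.2 := by
  unfold om; fun_prop
@[fun_prop] lemma cont_omφ (b : Fin 3 → V) : Continuous fun p : ℝ × ℝ => omφ b p.1 p.2 := by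
  unfold omφ; fun_prop
@[fun_prop] lemma cont_eθ (b : Fin 3 → V) : Continuous (eθ b) := by
  unfold eθ; fun_prop

lemma d_om_φ (b : Fin 3 → V) (φ θ : ℝ) : HasDerivAt (fun φ => om b φ θ) (omφ b φ θ) φ := by
  unfold om omφ
  exact ((((hasDerivAt_sin φ).mul_const _).smul_const _).add
    (((hasDerivAt_sin φ).mul_const _).smul_const _)).add ((hasDerivAt_cos φ).smul_const _)

lemma d_omφ_φ (b : Fin 3 → V) (φ θ : ℝ) : HasDerivAt (fun φ => omφ b φ θ) (-om b φ θ) φ := by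
  have := ((((hasDerivAt_cos φ).mul_const (cos θ)).smul_const (b 0)).add
    (((hasDerivAt_cos φ).mul_const (sin θ)).smul_const (b 1))).add
      ((hasDerivAt_sin φ).neg.smul_const (b 2))
  unfold om omφ
  refine HasDerivAt.congr_deriv this ?_
  module

lemma d_om_θ (b : Fin 3 → V) (φ θ : ℝ) : HasDerivAt (fun θ => om b φ θ) (sin φ • eθ b θ) θ := by
  have := ((((hasDerivAt_cos θ).const_mul (sin φ)).smul_const (b 0)).add
    (((hasDerivAt_sin θ).const_mul (sin φ)).smul_const (b 1))).add_const (cos φ • b 2)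
  unfold om eθ
  refine HasDerivAt.congr_deriv this ?_
  module

lemma d_eθ_θ (b : Fin 3 → V) (φ θ : ℝ) :
    HasDerivAt (fun θ => eθ b θ) (-(sin φ • om b φ θ + cos φ • omφ b φ θ)) θ := by
  have := ((hasDerivAt_sin θ).neg.smul_const (b 0)).add ((hasDerivAt_cos θ).smul_const (b 1))
  unfold om eθ omφ
  refine HasDerivAt.congr_deriv this ?_
  have h := sin_sq_add_cos_sq φ
  match_scalars
  · linear_combination (cos θ) * h
  · linear_combination (sin θ) * h
  · ring

/-- trace in the moving frame -/
lemma trace_frame (b : Fin 3 → V) (B : V →L[ℝ] V →L[ℝ] ℝ) (hB : ∀ v w, B v w = B w v)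
    (φ θ : ℝ) : B (om b φ θ) (om b φ θ) + B (omφ b φ θ) (omφ b φ θ) + B (eθ b θ) (eθ b θ)
      = ∑ i, B (b i) (b i) := by
  unfold om omφ eθ
  simp only [map_add, map_smul, add_apply, smul_apply,
    smul_eq_mul, Fin.sum_univ_three, hB (b 1) (b 0), hB (b 2) (b 0), hB (b 2) (b 1)]
  have h := sin_sq_add_cos_sq φ
  have h2 := sin_sq_add_cos_sq θ
  linear_combination (B (b 0) (b 0) * cos θ ^ 2 + B (b 1) (b 1) * sin θ ^ 2 + B (b 2) (b 2)
    + 2 * B (b 0) (b 1) * sin θ * cos θ) * h + (B (b 0) (b 0) + B (b 1) (b 1)) * h2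

variable (U : V → ℝ) (DU : V → V →L[ℝ] ℝ) (D2U : V → V →L[ℝ] V →L[ℝ] ℝ)

lemma d_U (hU : ∀ q, HasFDerivAt U (DU q) q) {γ : ℝ → V} {γ' : V} {s : ℝ}
    (h : HasDerivAt γ γ' s) : HasDerivAt (fun s => U (γ s)) (DU (γ s) γ') s :=
  (hU (γ s)).comp_hasDerivAt s h

lemma d_DU (hDU : ∀ q, HasFDerivAt DU (D2U q) q) {γ w : ℝ → V} {γ' w' : V} {s : ℝ}
    (h : HasDerivAt γ γ' s) (hw : HasDerivAt w w' s) :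
    HasDerivAt (fun s => DU (γ s) (w s)) (D2U (γ s) γ' (w s) + DU (γ s) w') s :=
  ((hDU (γ s)).comp_hasDerivAt s h).clm_apply hw

lemma darboux (hDU : ∀ q, HasFDerivAt DU (D2U q) q) (hc : Continuous D2U)
    (hsym : ∀ q v w, D2U q v w = D2U q w v) (b : Fin 3 → V) (p : V) (r : ℝ) :
    J (fun φ θ => sin φ * (r * (∑ i, D2U (p + r • om b φ θ) (b i) (b i))
      - 2 * DU (p + r • om b φ θ) (om b φ θ)
      - r * D2U (p + r • om b φ θ) (om b φ θ) (om b φ θ))) = 0 := by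
  have cD : Continuous DU := continuous_iff_continuousAt.2 fun q => (hDU q).continuousAt
  have e1 := J_phi (fun φ θ => sin φ * DU (p + r • om b φ θ) (omφ b φ θ))
    (fun φ θ => cos φ * DU (p + r • om b φ θ) (omφ b φ θ) + sin φ *
      (D2U (p + r • om b φ θ) (r • omφ b φ θ) (omφ b φ θ)
        + DU (p + r • om b φ θ) (-om b φ θ)))
    (by fun_prop) (by fun_prop)
    (fun φ θ => (hasDerivAt_sin φ).mul
      (d_DU DU D2U hDU (((d_om_φ b φ θ).const_smul r).const_add p) (d_omφ_φ b φ θ)))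
    (by simp) (by simp)
  have e2 := J_theta (fun φ θ => DU (p + r • om b φ θ) (eθ b θ))
    (fun φ θ => D2U (p + r • om b φ θ) (r • sin φ • eθ b θ) (eθ b θ)
        + DU (p + r • om b φ θ) (-(sin φ • om b φ θ + cos φ • omφ b φ θ)))
    (by fun_prop)
    (fun φ θ => d_DU DU D2U hDU (((d_om_θ b φ θ).const_smul r).const_add p) (d_eθ_θ b φ θ))
    (by intro φ; simp [om, eθ])
  have e3 := J_add_zero _ _ e1 e2 (by fun_prop) (by fun_prop)
  refine Eq.trans ?_ e3
  congr 1
  ext φ θ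
  rw [← trace_frame b _ (hsym _) φ θ]
  simp only [map_add, map_smul, map_neg, smul_apply, smul_eq_mul]
  ring

lemma d_line (p e w : V) (T s : ℝ) :
    HasDerivAt (fun s : ℝ => p + s • e + (T - s) • w) (e - w) s := by
  have := (((hasDerivAt_id s).smul_const e).const_add p).add
    (((hasDerivAt_id s).const_sub T).smul_const w)
  refine HasDerivAt.congr_deriv this ?_
  module

lemma d_ray (p w : V) (r : ℝ) : HasDerivAt (fun r : ℝ => p + r • w) w r := by
  have := ((hasDerivAt_id r).smul_const w).const_add p
  refine HasDerivAt.congr_deriv this ?_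
  module

lemma kirchhoff (hU : ∀ q, HasFDerivAt U (DU q) q)
    (hDU : ∀ q, HasFDerivAt DU (D2U q) q) (hc : Continuous D2U)
    (hsym : ∀ q v w, D2U q v w = D2U q w v) (b : Fin 3 → V) (e : V)
    (hw : ∀ q, D2U q e e = ∑ i, D2U q (b i) (b i)) (p : V) (T : ℝ) :
    4 * π * U (p + T • e) = J (fun φ θ => sin φ * (U (p + T • om b φ θ)
      + T * DU (p + T • om b φ θ) (om b φ θ) + T * DU (p + T • om b φ θ) e)) := by
  have cU : Continuous U := continuous_iff_continuousAt.2 fun q => (hU q).continuousAt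
  have cD : Continuous DU := continuous_iff_continuousAt.2 fun q => (hDU q).continuousAt
  have key := deriv_J
    (fun s φ θ => sin φ * (U (p + s • e + (T - s) • om b φ θ)
      + (T - s) * DU (p + s • e + (T - s) • om b φ θ) (om b φ θ)
      + (T - s) * DU (p + s • e + (T - s) • om b φ θ) e))
    (fun s φ θ => sin φ * (DU (p + s • e + (T - s) • om b φ θ) (e - om b φ θ)
      + ((-1) * DU (p + s • e + (T - s) • om b φ θ) (om b φ θ)
        + (T - s) * (D2U (p + s • e + (T - s) • om b φ θ) (e - om b φ θ) (om b φ θ)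
          + DU (p + s • e + (T - s) • om b φ θ) 0))
      + ((-1) * DU (p + s • e + (T - s) • om b φ θ) e
        + (T - s) * (D2U (p + s • e + (T - s) • om b φ θ) (e - om b φ θ) e
          + DU (p + s • e + (T - s) • om b φ θ) 0))))
    (by fun_prop) (by fun_prop)
    (fun s φ θ => ((((d_U U DU hU (d_line p e (om b φ θ) T s)).add
      (((hasDerivAt_id s).const_sub T).mul
        (d_DU DU D2U hDU (d_line p e (om b φ θ) T s) (hasDerivAt_const s (om b φ θ))))).add
      (((hasDerivAt_id s).const_sub T).mul
        (d_DU DU D2U hDU (d_line p e (om b φ θ) T s) (hasDerivAt_const s e)))).const_mul (sin φ)))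
  have hz : ∀ s, HasDerivAt (fun s => J fun φ θ => sin φ * (U (p + s • e + (T - s) • om b φ θ)
      + (T - s) * DU (p + s • e + (T - s) • om b φ θ) (om b φ θ)
      + (T - s) * DU (p + s • e + (T - s) • om b φ θ) e)) 0 s := by
    intro s
    refine (key s).congr_deriv ?_
    rw [← darboux DU D2U hDU hc hsym b (p + s • e) (T - s)]
    congr 1
    ext φ θ
    rw [← hw]
    simp only [map_sub, sub_apply, map_zero, hsym _ (om b φ θ) e]
    ring
  have hconst := is_const_of_deriv_eq_zero (fun s => (hz s).differentiableAt)
    (fun s => (hz s).deriv) T 0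
  simp only [sub_self, zero_smul, add_zero, zero_mul, sub_zero] at hconst
  rw [← hconst, mul_comm, ← J_sin, ← J_const_mul]
  congr 1
  ext φ θ
  ring

lemma pos_abs (hU : ∀ q, HasFDerivAt U (DU q) q)
    (hDU : ∀ q, HasFDerivAt DU (D2U q) q) (hc : Continuous D2U)
    (hsym : ∀ q v w, D2U q v w = D2U q w v) (b : Fin 3 → V) (e : V)
    (hw : ∀ q, D2U q e e = ∑ i, D2U q (b i) (b i)) (p : V) (T : ℝ) (hT : 0 ≤ T)
    (dec0 : ∀ ε > 0, ∃ R : ℝ, ∀ r ≥ R, ∀ φ θ, |U (p + r • om b φ θ)| ≤ ε)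
    (dec1 : ∀ ε > 0, ∃ R : ℝ, ∀ r ≥ R, ∀ φ θ, |DU (p + r • om b φ θ) e| ≤ ε)
    (hpos : ∀ (r φ θ : ℝ), |D2U (p + r • om b φ θ) (om b φ θ) e| <
      -∑ i, D2U (p + r • om b φ θ) (b i) (b i)) :
    0 < U (p + T • e) := by
  have cU : Continuous U := continuous_iff_continuousAt.2 fun q => (hU q).continuousAt
  have cD : Continuous DU := continuous_iff_continuousAt.2 fun q => (hDU q).continuousAt
  have hK := kirchhoff U DU D2U hU hDU hc hsym b e hw p T
  set F : ℝ → ℝ := fun r => J (fun φ θ => sin φ * (U (p + r • om b φ θ)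
      + r * DU (p + r • om b φ θ) (om b φ θ) + T * DU (p + r • om b φ θ) e)) with hF
  set N' : ℝ → ℝ := fun r => J (fun φ θ => sin φ * (1 * U (p + r • om b φ θ)
      + r * DU (p + r • om b φ θ) (om b φ θ))) with hN'
  set N : ℝ → ℝ := fun r => J (fun φ θ => sin φ * (r * U (p + r • om b φ θ))) with hN
  set B : ℝ → ℝ := fun r => J (fun φ θ => sin φ * (DU (p + r • om b φ θ) e)) with hB
  have dF : ∀ r, HasDerivAt F (J (fun φ θ => sin φ *
      (r * (∑ i, D2U (p + r • om b φ θ) (b i) (b i))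
        + T * D2U (p + r • om b φ θ) (om b φ θ) e))) r := by
    intro r
    have key := deriv_J
      (fun r φ θ => sin φ * (U (p + r • om b φ θ)
        + r * DU (p + r • om b φ θ) (om b φ θ) + T * DU (p + r • om b φ θ) e))
      (fun r φ θ => sin φ * (DU (p + r • om b φ θ) (om b φ θ)
        + (1 * DU (p + r • om b φ θ) (om b φ θ)
          + r * (D2U (p + r • om b φ θ) (om b φ θ) (om b φ θ) + DU (p + r • om b φ θ) 0))
        + T * (D2U (p + r • om b φ θ) (om b φ θ) e + DU (p + r • om b φ θ) 0)))
      (by fun_prop) (by fun_prop)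
      (fun r φ θ => ((((d_U U DU hU (d_ray p (om b φ θ) r)).add
        ((hasDerivAt_id r).mul
          (d_DU DU D2U hDU (d_ray p (om b φ θ) r) (hasDerivAt_const r (om b φ θ))))).add
        ((d_DU DU D2U hDU (d_ray p (om b φ θ) r) (hasDerivAt_const r e)).const_mul T)).const_mul
          (sin φ))) r
    refine key.congr_deriv ?_
    rw [← add_zero (J _), ← darboux DU D2U hDU hc hsym b p r, ← J_add]
    · congr 1
      ext φ θ
      simp only [map_zero]
      ring
    · fun_prop
    · fun_prop
  have dN : ∀ r, HasDerivAt N (N' r) r := fun r => deriv_J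
      (fun r φ θ => sin φ * (r * U (p + r • om b φ θ)))
      (fun r φ θ => sin φ * (1 * U (p + r • om b φ θ)
        + r * DU (p + r • om b φ θ) (om b φ θ)))
      (by fun_prop) (by fun_prop)
      (fun r φ θ => (((hasDerivAt_id r).mul (d_U U DU hU (d_ray p (om b φ θ) r))).const_mul
          (sin φ))) r
  have hFN : ∀ r, F r = N' r + T * B r := by
    intro r
    simp only [hF, hN', hB]
    rw [← J_const_mul, ← J_add]
    · congr 1
      ext φ θ
      ring
    · fun_prop
    · fun_prop
  have hanti : StrictAntiOn F (Ici T) := by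
    refine strictAntiOn_of_deriv_neg (convex_Ici T)
      (fun r _ => (dF r).continuousAt.continuousWithinAt) fun r hr => ?_
    rw [interior_Ici, mem_Ioi] at hr
    rw [(dF r).deriv]
    have := J_pos (fun φ θ => (-1) * (sin φ *
      (r * (∑ i, D2U (p + r • om b φ θ) (b i) (b i))
        + T * D2U (p + r • om b φ θ) (om b φ θ) e))) (by fun_prop) (fun φ θ hφ => by
        have hs := sin_pos_of_mem_Ioo hφ
        have hp := hpos r φ θ
        have hr0 : 0 < r := by linarith
        have h1 : |D2U (p + r • om b φ θ) (om b φ θ) e| * T ≤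
          |D2U (p + r • om b φ θ) (om b φ θ) e| * r :=
            mul_le_mul_of_nonneg_left hr.le (abs_nonneg _)
        have h2 := mul_lt_mul_of_pos_right hp hr0
        have h3 := mul_le_mul_of_nonneg_right (le_abs_self (D2U (p + r • om b φ θ) (om b φ θ) e)) hT
        have : 0 < -(r * (∑ i, D2U (p + r • om b φ θ) (b i) (b i))
          + T * D2U (p + r • om b φ θ) (om b φ θ) e) := by nlinarith
        nlinarith [mul_pos hs this])
    rw [J_const_mul] at this
    linarith
  by_contra hneg
  have hFT : F T ≤ 0 := by
    change _ = F T at hK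
    rw [← hK]
    exact mul_nonpos_of_nonneg_of_nonpos (by positivity) (not_lt.1 hneg)
  have hF1 : F (T + 1) < 0 :=
    (hanti (mem_Ici.2 le_rfl) (mem_Ici.2 (by linarith)) (by linarith)).trans_le hFT
  obtain ⟨c, hcdef⟩ : ∃ c, c = -F (T + 1) := ⟨_, rfl⟩
  have hcpos : 0 < c := by linarith
  obtain ⟨K, hKdef⟩ : ∃ K, K = 2 * π * π := ⟨_, rfl⟩
  have hKpos : 0 < K := by rw [hKdef]; positivity
  obtain ⟨ε, hε⟩ : ∃ ε, ε = c / (8 * K * (T + 1)) := ⟨_, rfl⟩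
  have hεpos : 0 < ε := by rw [hε]; positivity
  have hεK : ε * K * (T + 1) = c / 8 := by
    rw [hε]; field_simp
  have hεK1 : ε * K ≤ c / 8 := by
    rw [← hεK]; exact le_mul_of_one_le_right (by positivity) (by linarith)
  have hεK2 : T * (ε * K) ≤ c / 8 := by
    rw [← hεK]; nlinarith [mul_pos hεpos hKpos]
  obtain ⟨R0, hR0⟩ := dec0 ε hεpos
  obtain ⟨R1, hR1⟩ := dec1 ε hεpos
  obtain ⟨R, hR⟩ : ∃ R, R = max (T + 1) (max R0 R1) := ⟨_, rfl⟩
  have hRT : T + 1 ≤ R := hR ▸ le_max_left _ _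
  have hRR0 : R0 ≤ R := hR ▸ (le_max_left _ _).trans (le_max_right _ _)
  have hRR1 : R1 ≤ R := hR ▸ (le_max_right _ _).trans (le_max_right _ _)
  have hRpos : 0 < R := by linarith
  have bB : ∀ r ≥ R, |B r| ≤ ε * K := by
    intro r hr
    rw [hKdef]
    refine J_bound _ _ fun φ θ => ?_
    rw [abs_mul]
    exact (mul_le_of_le_one_left (abs_nonneg _) (abs_sin_le_one φ)).trans
      (hR1 r (hRR1.trans hr) φ θ)
  have bN : ∀ r ≥ R, |N r| ≤ r * ε * K := by
    intro r hr
    rw [hKdef]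
    refine J_bound _ _ fun φ θ => ?_
    rw [abs_mul]
    refine (mul_le_of_le_one_left (abs_nonneg _) (abs_sin_le_one φ)).trans ?_
    rw [abs_mul, abs_of_pos (hRpos.trans_le hr)]
    exact mul_le_mul_of_nonneg_left (hR0 r (hRR0.trans hr) φ θ) (hRpos.trans_le hr).le
  obtain ⟨ξ, hξ, hslope⟩ := exists_hasDerivAt_eq_slope N N' (by linarith : R < 2 * R)
    (fun r _ => (dN r).continuousAt.continuousWithinAt) (fun r _ => dN r)
  have h1 : F ξ ≤ -c := by
    rw [hcdef, neg_neg]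
    exact hanti.antitoneOn (mem_Ici.2 (by linarith)) (mem_Ici.2 (by linarith [hξ.1]))
      (by linarith [hξ.1])
  have h2 : -(c / 8) ≤ T * B ξ := by
    have := (abs_le.1 (bB ξ hξ.1.le)).1
    nlinarith [mul_le_mul_of_nonneg_left this hT]
  have h3 : N' ξ ≤ -(7 * c / 8) := by linarith [hFN ξ]
  rw [hslope, div_le_iff₀ (by linarith)] at h3
  have h4 := (abs_le.1 (bN R le_rfl)).2
  have h5 := (abs_le.1 (bN (2 * R) (by linarith))).1
  nlinarith [mul_le_mul_of_nonneg_left hεK1 hRpos.le, mul_pos hRpos hcpos]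

end abs

section concrete

abbrev E3 := EuclideanSpace ℝ (Fin 3)

lemma iter2 {V : Type*} [NormedAddCommGroup V] [NormedSpace ℝ V]
    (U : V → ℝ) (DU : V → V →L[ℝ] ℝ) (D2U : V → V →L[ℝ] V →L[ℝ] ℝ)
    (hU : ∀ q, HasFDerivAt U (DU q) q) (hDU : ∀ q, HasFDerivAt DU (D2U q) q)
    (q v : V) (s : ℝ) :
    iteratedDeriv 2 (fun s : ℝ => U (q + s • v)) s = D2U (q + s • v) v v := by
  have h1 : deriv (fun s : ℝ => U (q + s • v)) = fun s => DU (q + s • v) v := by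
    ext s
    exact (d_U U DU hU (d_ray q v s)).deriv
  rw [iteratedDeriv_succ, iteratedDeriv_one, h1]
  have := d_DU DU D2U hDU (d_ray q v s) (hasDerivAt_const s v)
  rw [this.deriv, map_zero, add_zero]

lemma om_prod (φ θ : ℝ) :
    om (fun i => ((0 : ℝ), (EuclideanSpace.single i (1:ℝ) : E3))) φ θ
      = (0, om (fun i => (EuclideanSpace.single i (1:ℝ) : E3)) φ θ) := by
  simp [om]

lemma norm_om (φ θ : ℝ) : ‖om (fun i => (EuclideanSpace.single i (1:ℝ) : E3)) φ θ‖ = 1 := by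
  rw [EuclideanSpace.norm_eq, Real.sqrt_eq_one]
  simp [om, Fin.sum_univ_three]
  have h := sin_sq_add_cos_sq φ
  have h2 := sin_sq_add_cos_sq θ
  linear_combination sin φ ^ 2 * h2 + h

lemma decay_ray (f : E3 → ℝ)
    (hf : Tendsto (fun x => ‖iteratedFDeriv ℝ 0 f x‖) (cocompact E3) (nhds 0)) (x : E3)
    (ε : ℝ) (hε : 0 < ε) :
    ∃ R : ℝ, ∀ r ≥ R, ∀ w : E3, ‖w‖ = 1 → |f (x + r • w)| ≤ ε := by
  simp only [norm_iteratedFDeriv_zero] at hf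
  have h := hf.eventually (gt_mem_nhds hε)
  rw [← Metric.cobounded_eq_cocompact, Filter.hasBasis_cobounded_norm.eventually_iff] at h
  obtain ⟨R, -, hR⟩ := h
  refine ⟨max 0 (R + ‖x‖), fun r hr w hw => ?_⟩
  have hr0 : 0 ≤ r := (le_max_left _ _).trans hr
  have hr1 : R + ‖x‖ ≤ r := (le_max_right _ _).trans hr
  refine (hR (x := x + r • w) ?_).le
  have h1 : ‖r • w‖ ≤ ‖x + r • w‖ + ‖x‖ := by
    have := norm_sub_le (x + r • w) x
    simpa using this
  rw [norm_smul, hw, mul_one, Real.norm_of_nonneg hr0] at h1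
  change R ≤ ‖x + r • w‖
  linarith

lemma main_nonneg
    (u : ℝ → E3 → ℝ) (u₀ u₁ : E3 → ℝ)
    (hsmooth : ContDiff ℝ (⊤ : ℕ∞) (fun p : ℝ × E3 => u p.1 p.2))
    (hwave : ∀ (t : ℝ) (x : E3), iteratedDeriv 2 (fun τ => u τ x) t = lap3 (u t) x)
    (h0 : ∀ x, u 0 x = u₀ x)
    (h1 : ∀ x, deriv (fun τ => u τ x) 0 = u₁ x)
    (hdecay0 : Tendsto (fun x => ‖iteratedFDeriv ℝ 0 u₀ x‖) (cocompact E3) (nhds 0))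
    (hdecay1 : Tendsto (fun x => ‖iteratedFDeriv ℝ 0 u₁ x‖) (cocompact E3) (nhds 0))
    (hpos : ∀ x, ‖gradient u₁ x‖ < -(lap3 u₀ x))
    (T : ℝ) (hT : 0 ≤ T) (x : E3) : 0 < u T x := by
  obtain ⟨U, hUdef⟩ : ∃ U : ℝ × E3 → ℝ, U = fun p => u p.1 p.2 := ⟨_, rfl⟩
  rw [← hUdef] at hsmooth
  have s1 : ContDiff ℝ 1 (fderiv ℝ U) :=
    hsmooth.fderiv_right (m := 1) (by norm_cast)
  have hU : ∀ q, HasFDerivAt U (fderiv ℝ U q) q := fun q =>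
    (hsmooth.differentiable (by simp) q).hasFDerivAt
  have hDU : ∀ q, HasFDerivAt (fderiv ℝ U) (fderiv ℝ (fderiv ℝ U) q) q := fun q =>
    (s1.differentiable (by simp) q).hasFDerivAt
  have hc : Continuous (fderiv ℝ (fderiv ℝ U)) := s1.continuous_fderiv (by simp)
  have hsym : ∀ q v w, fderiv ℝ (fderiv ℝ U) q v w = fderiv ℝ (fderiv ℝ U) q w v := fun q v w =>
    (hsmooth.contDiffAt (x := q)).isSymmSndFDerivAt (by simp; norm_cast) v w
  generalize fderiv ℝ (fderiv ℝ U) = D2U at *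
  generalize fderiv ℝ U = DU at *
  set b : Fin 3 → ℝ × E3 := fun i => ((0 : ℝ), (EuclideanSpace.single i (1:ℝ) : E3)) with hb
  have hUa : ∀ t y, U (t, y) = u t y := fun t y => by rw [hUdef]
  have hlap : ∀ t y, lap3 (u t) y = ∑ i, D2U (t, y) (b i) (b i) := by
    intro t y
    unfold lap3
    refine Finset.sum_congr rfl fun i _ => ?_
    have := iter2 U DU D2U hU hDU (t, y) (b i) 0
    rw [zero_smul, add_zero] at this
    rw [← this]
    simp [hb, hUa]
  have htt : ∀ t y, iteratedDeriv 2 (fun τ => u τ y) t = D2U (t, y) (1, 0) (1, 0) := by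
    intro t y
    have := iter2 U DU D2U hU hDU (0, y) (1, 0) t
    simpa [hUa] using this
  have hu1 : ∀ y, DU (0, y) (1, 0) = u₁ y := by
    intro y
    rw [← h1]
    have := d_U U DU hU (d_ray ((0:ℝ), y) (1, 0) 0)
    have h2 := this.deriv
    simp [hUa] at h2
    exact h2.symm
  have hu0 : u 0 = u₀ := funext h0
  have hgrad : ∀ y w, fderiv ℝ u₁ y w = D2U (0, y) (0, w) (1, 0) := by
    intro y w
    have e1 : u₁ = fun y => DU (0, y) (1, 0) := funext fun y => (hu1 y).symm
    have dd : DifferentiableAt ℝ u₁ y := by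
      rw [e1]
      have hD : Differentiable ℝ DU := fun q => (hDU q).differentiableAt
      fun_prop
    have k2 : HasDerivAt (fun s : ℝ => u₁ (y + s • w)) (fderiv ℝ u₁ y w) 0 := by
      have k3 : HasFDerivAt u₁ (fderiv ℝ u₁ y) (y + (0:ℝ) • w) := by
        simpa using dd.hasFDerivAt
      exact k3.comp_hasDerivAt (0:ℝ) (d_ray y w 0)
    have k4 := d_DU DU D2U hDU (d_ray ((0:ℝ), y) (0, w) 0)
      (hasDerivAt_const (0:ℝ) ((1:ℝ), (0:E3)))
    have k5 := k2.deriv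
    have k6 := k4.deriv
    simp [hu1] at k6
    rw [← k5, k6]
  have hq : ∀ (r φ θ : ℝ), ((0:ℝ), x) + r • om b φ θ =
      (0, x + r • om (fun i => (EuclideanSpace.single i (1:ℝ) : E3)) φ θ) := by
    intro r φ θ
    rw [hb, om_prod]
    simp
  have := pos_abs U DU D2U hU hDU hc hsym b (1, 0)
    (fun q => by
      have := hwave q.1 q.2
      rw [htt, hlap] at this
      exact this) (0, x) T hT
    (fun ε hε => by
      obtain ⟨R, hR⟩ := decay_ray u₀ hdecay0 x ε hε
      refine ⟨R, fun r hr φ θ => ?_⟩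
      rw [hq, hUa, h0]
      exact hR r hr _ (norm_om φ θ))
    (fun ε hε => by
      obtain ⟨R, hR⟩ := decay_ray u₁ hdecay1 x ε hε
      refine ⟨R, fun r hr φ θ => ?_⟩
      rw [hq, hu1]
      exact hR r hr _ (norm_om φ θ))
    (fun r φ θ => by
      rw [hq, ← hlap, hu0]
      refine lt_of_le_of_lt ?_ (hpos _)
      rw [hb, om_prod, ← hgrad, gradient, LinearIsometryEquiv.norm_map]
      have := (fderiv ℝ u₁ (x + r • om (fun i => (EuclideanSpace.single i (1:ℝ) : E3)) φ θ)).le_opNorm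
        (om (fun i => (EuclideanSpace.single i (1:ℝ) : E3)) φ θ)
      rwa [norm_om, mul_one] at this)
  simpa [hUa] using this

end concrete
end WavePos

/-- if the data decay at infinity together with their derivatives and
`-Δu₀ > |∇u₁|` everywhere, then the solution of the free wave equation on ℝ³⁺¹
is everywhere positive. -/
theorem wave_positive_nonradial_laplacian
    (u : ℝ → EuclideanSpace ℝ (Fin 3) → ℝ)
    (u₀ u₁ : EuclideanSpace ℝ (Fin 3) → ℝ)
    (hsmooth : ContDiff ℝ (⊤ : ℕ∞) (fun p : ℝ × EuclideanSpace ℝ (Fin 3) => u p.1 p.2))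
    (hwave : ∀ (t : ℝ) (x : EuclideanSpace ℝ (Fin 3)),
      iteratedDeriv 2 (fun τ => u τ x) t = lap3 (u t) x)
    (h0 : ∀ x, u 0 x = u₀ x)
    (h1 : ∀ x, deriv (fun τ => u τ x) 0 = u₁ x)
    (hdecay0 : ∀ n : ℕ,
      Tendsto (fun x => ‖iteratedFDeriv ℝ n u₀ x‖) (cocompact (EuclideanSpace ℝ (Fin 3))) (nhds 0))
    (hdecay1 : ∀ n : ℕ,
      Tendsto (fun x => ‖iteratedFDeriv ℝ n u₁ x‖) (cocompact (EuclideanSpace ℝ (Fin 3))) (nhds 0))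
    (hpos : ∀ x, ‖gradient u₁ x‖ < -(lap3 u₀ x)) :
    ∀ (t : ℝ) (x : EuclideanSpace ℝ (Fin 3)), 0 < u t x := by
  intro t x
  rcases le_total 0 t with ht | ht
  · exact WavePos.main_nonneg u u₀ u₁ hsmooth hwave h0 h1 (hdecay0 0) (hdecay1 0) hpos t ht x
  · have hd : ∀ y s, deriv (fun τ => u (-τ) y) s = -deriv (fun τ => u τ y) (-s) :=
      fun y s => deriv_comp_neg (fun τ => u τ y) s
    have := WavePos.main_nonneg (fun t => u (-t)) u₀ (fun y => -u₁ y)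
      (hsmooth.comp (g := fun p : ℝ × EuclideanSpace ℝ (Fin 3) => u p.1 p.2)
        (f := fun p : ℝ × EuclideanSpace ℝ (Fin 3) => (-p.1, p.2)) (by fun_prop))
      (fun s y => by
        rw [iteratedDeriv_comp_neg 2 (fun τ => u τ y) s, hwave]
        simp)
      (fun y => by simp [h0])
      (fun y => by rw [hd, neg_zero, h1])
      (hdecay0 0)
      (by
        have := hdecay1 0
        simp only [norm_iteratedFDeriv_zero, norm_neg] at this ⊢
        exact this)
      (fun y => by
        have := hpos y
        simp only [gradient, LinearIsometryEquiv.norm_map] at this ⊢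
        rwa [fderiv_fun_neg, norm_neg])
      (-t) (by linarith) x
    simpa using this
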